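/- Let d ≥ R ≥ 1, λ : Fin R → ℝ, let A ∈ ℝ^{d×R} have orthonormal columns, and let B, C ∈ ℝ^{d×R} have columns of Euclidean norm at most 1. Define T(a,b,c) = Σ_{j=1}^{R} λ_j A_{a j} B_{b j} C_{c j}. Let Φ : Fin d × Fin d × Fin d → ℝ and φ ≥ 0 satisfy |Σ_{k,z,u} Φ(k,z,u) x_k y_z w_u| ≤ φ‖x‖‖y‖‖w‖ for all x, y, w ∈ ℝ^d. Let T_u and Φ_u denote the u-th third-mode slices of T and Φ, and set E₁ = Σ_{u=1}^{d} T_u Φ_uᵀ. Then for all x, y ∈ ℝ^d, |xᵀ E₁ y| ≤ ‖λ‖ · φ · ‖x‖ · ‖y‖, where ‖λ‖ = √(Σ_{j=1}^{R} λ_j²). -/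

import Mathlib

open Matrix BigOperators

/-- Euclidean norm of a finite real vector. -/
noncomputable def eunorm {n : ℕ} (x : Fin n → ℝ) : ℝ := Real.sqrt (∑ i, x i ^ 2)

/-!
Each slice of `T` factors as `T_u = A diag(λ_m C_{u m}) Bᵀ`, so summing over `u` gives `E₁ y = A v`
with `v_m = λ_m Φ(y, B_m, C_m)`. Every value `Φ(y, B_m, C_m)` is at most `φ ‖y‖`, hence
`‖v‖ ≤ ‖λ‖ φ ‖y‖`, and `A` does not increase norms because `‖A‖² = ‖Aᵀ A‖ ≤ 1`.
-/

section Tensor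

variable {ι κ μ ν ρ α : Type*} [CommSemiring α]

/-- The `u`-th third-mode slice of a third-order tensor, the matrix written `S_u`. -/
def thirdSlice (S : ι → κ → ν → α) (u : ν) : Matrix ι κ α :=
  of fun a b => S a b u

/-- The third-order tensor with CP decomposition `∑ m, λ m • A m ⊗ B m ⊗ C m`, whose factors are the
columns of `A`, `B` and `C`. -/
def cpTensor [Fintype ρ] (lam : ρ → α) (A : Matrix ι ρ α) (B : Matrix κ ρ α) (C : Matrix ν ρ α) :
    ι → κ → ν → α :=
  fun a b c => ∑ m, lam m * A a m * B b m * C c m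

/-- The value `Φ(x, y, w)` of a third-order tensor regarded as a trilinear form. -/
def trilinearValue [Fintype μ] [Fintype κ] [Fintype ν] (Φ : μ → κ → ν → α)
    (x : μ → α) (y : κ → α) (w : ν → α) : α :=
  ∑ k, ∑ z, ∑ u, Φ k z u * x k * y z * w u

/-- The cross term `∑ u, T_u Φ_uᵀ` of two third-order tensors, written `E₁` when `T` is the CP
tensor and `Φ` its perturbation. -/
def crossTerm [Fintype κ] [Fintype ν] (T : ι → κ → ν → α) (Φ : μ → κ → ν → α) : Matrix ι μ α :=
  ∑ u, thirdSlice T u * (thirdSlice Φ u)ᵀ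

theorem thirdSlice_cpTensor [Fintype ρ] [DecidableEq ρ] (lam : ρ → α)
    (A : Matrix ι ρ α) (B : Matrix κ ρ α) (C : Matrix ν ρ α) (u : ν) :
    thirdSlice (cpTensor lam A B C) u = A * diagonal (fun m => lam m * C u m) * Bᵀ := by
  ext a b
  rw [mul_apply]
  simp only [mul_diagonal, transpose_apply]
  exact Finset.sum_congr rfl fun m _ => by ring

variable [Fintype κ] [Fintype μ] [Fintype ν]

theorem trilinearValue_eq_sum_dotProduct (Φ : μ → κ → ν → α) (x : μ → α) (y : κ → α) (w : ν → α) :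
    trilinearValue Φ x y w = ∑ u, w u * (y ⬝ᵥ (thirdSlice Φ u)ᵀ *ᵥ x) := by
  simp only [trilinearValue, dotProduct, mulVec, transpose_apply, thirdSlice, of_apply,
    Finset.mul_sum]
  rw [Finset.sum_comm_cycle]
  refine Finset.sum_congr rfl fun u _ => ?_
  rw [Finset.sum_comm]
  exact Finset.sum_congr rfl fun z _ => Finset.sum_congr rfl fun k _ => by ring

theorem dotProduct_crossTerm_mulVec [Fintype ι] (T : ι → κ → ν → α) (Φ : μ → κ → ν → α)
    (x : ι → α) (y : μ → α) :
    x ⬝ᵥ crossTerm T Φ *ᵥ y = ∑ i, ∑ j, x i * (∑ u, ∑ b, T i b u * Φ j b u) * y j := by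
  simp only [crossTerm, dotProduct, mulVec, Matrix.sum_apply, mul_apply, transpose_apply,
    thirdSlice, of_apply, mul_assoc, ← Finset.mul_sum]

theorem crossTerm_cpTensor_mulVec [Fintype ρ] (lam : ρ → α)
    (A : Matrix ι ρ α) (B : Matrix κ ρ α) (C : Matrix ν ρ α) (Φ : μ → κ → ν → α) (y : μ → α) :
    crossTerm (cpTensor lam A B C) Φ *ᵥ y
      = A *ᵥ (lam * fun m => trilinearValue Φ y (B.col m) (C.col m)) := by
  classical
  have slice_mulVec (u : ν) : (thirdSlice (cpTensor lam A B C) u * (thirdSlice Φ u)ᵀ) *ᵥ y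
      = A *ᵥ fun m => lam m * (C u m * (B.col m ⬝ᵥ (thirdSlice Φ u)ᵀ *ᵥ y)) := by
    simp only [thirdSlice_cpTensor, ← mulVec_mulVec]
    congr 1
    ext m
    rw [mulVec_diagonal, mul_assoc]
    rfl
  simp only [crossTerm, sum_mulVec, slice_mulVec, ← mulVec_sum]
  congr 1
  ext m
  simp only [Finset.sum_apply, ← Finset.mul_sum, Pi.mul_apply, trilinearValue_eq_sum_dotProduct]
  rfl

end Tensor

section EuclideanNorm

open WithLp
open scoped Matrix.Norms.L2Operator

variable {ι κ μ ν ρ : Type*} [Fintype ι] [Fintype ρ]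

theorem sqrt_sum_sq_eq_norm_toLp (x : ι → ℝ) : √(∑ i, x i ^ 2) = ‖toLp 2 x‖ := by
  simp only [EuclideanSpace.norm_eq, Real.norm_eq_abs, sq_abs]

theorem abs_dotProduct_le_norm_mul_norm (x y : ι → ℝ) :
    |x ⬝ᵥ y| ≤ ‖toLp 2 x‖ * ‖toLp 2 y‖ := by
  simpa only [EuclideanSpace.inner_toLp_toLp, star_trivial, dotProduct_comm y x] using
    abs_real_inner_le_norm (toLp 2 x) (toLp 2 y)

variable {𝕜 : Type*} [RCLike 𝕜]

theorem norm_toLp_mul_le (v w : ι → 𝕜) : ‖toLp 2 (v * w)‖ ≤ ‖toLp 2 v‖ * ‖w‖ := by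
  classical
  have diagonal_mulVec : diagonal w *ᵥ v = v * w := by
    ext i
    rw [mulVec_diagonal, Pi.mul_apply, mul_comm]
  rw [← diagonal_mulVec, mul_comm, ← l2_opNorm_diagonal]
  exact l2_opNorm_mulVec (diagonal w) (toLp 2 v)

variable [DecidableEq ρ]

theorem l2_opNorm_le_one_of_conjTranspose_mul_self {A : Matrix ι ρ 𝕜} (hA : Aᴴ * A = 1) :
    ‖A‖ ≤ 1 := by
  have norm_one_le : ‖(1 : Matrix ρ ρ 𝕜)‖ ≤ 1 := by
    rw [← diagonal_one, l2_opNorm_diagonal]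
    exact (pi_norm_le_iff_of_nonneg zero_le_one).2 fun _ => norm_one.le
  rw [← hA, l2_opNorm_conjTranspose_mul_self, ← sq] at norm_one_le
  exact (sq_le_one_iff₀ (norm_nonneg A)).1 norm_one_le

variable [Fintype κ] [Fintype μ] [Fintype ν]

theorem norm_crossTerm_cpTensor_mulVec_le (lam : ρ → ℝ)
    (A : Matrix ι ρ ℝ) {B : Matrix κ ρ ℝ} {C : Matrix ν ρ ℝ}
    (hB : ∀ m, ‖toLp 2 (B.col m)‖ ≤ 1) (hC : ∀ m, ‖toLp 2 (C.col m)‖ ≤ 1)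
    {Φ : μ → κ → ν → ℝ} {φ : ℝ} (hφ : 0 ≤ φ)
    (hΦ : ∀ x y w, |trilinearValue Φ x y w| ≤ φ * ‖toLp 2 x‖ * ‖toLp 2 y‖ * ‖toLp 2 w‖)
    (y : μ → ℝ) :
    ‖toLp 2 (crossTerm (cpTensor lam A B C) Φ *ᵥ y)‖
      ≤ ‖A‖ * (‖toLp 2 lam‖ * (φ * ‖toLp 2 y‖)) := by
  set t : ρ → ℝ := fun m => trilinearValue Φ y (B.col m) (C.col m)
  have norm_t_le : ‖t‖ ≤ φ * ‖toLp 2 y‖ := by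
    refine (pi_norm_le_iff_of_nonneg (by positivity)).2 fun m => ?_
    calc |t m| ≤ φ * ‖toLp 2 y‖ * ‖toLp 2 (B.col m)‖ * ‖toLp 2 (C.col m)‖ := hΦ _ _ _
      _ ≤ φ * ‖toLp 2 y‖ * 1 * 1 := by gcongr; exacts [hB m, hC m]
      _ = φ * ‖toLp 2 y‖ := by rw [mul_one, mul_one]
  rw [crossTerm_cpTensor_mulVec]
  calc ‖toLp 2 (A *ᵥ (lam * t))‖ ≤ ‖A‖ * ‖toLp 2 (lam * t)‖ := l2_opNorm_mulVec A (toLp 2 _)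
    _ ≤ ‖A‖ * (‖toLp 2 lam‖ * ‖t‖) := by gcongr; exact norm_toLp_mul_le lam t
    _ ≤ ‖A‖ * (‖toLp 2 lam‖ * (φ * ‖toLp 2 y‖)) := by gcongr

theorem cross_term_perturbation_bound_general (lam : ρ → ℝ)
    {A : Matrix ι ρ ℝ} {B : Matrix κ ρ ℝ} {C : Matrix ν ρ ℝ} (hA : ‖A‖ ≤ 1)
    (hB : ∀ m, ‖toLp 2 (B.col m)‖ ≤ 1) (hC : ∀ m, ‖toLp 2 (C.col m)‖ ≤ 1)
    {Φ : μ → κ → ν → ℝ} {φ : ℝ} (hφ : 0 ≤ φ)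
    (hΦ : ∀ x y w, |trilinearValue Φ x y w| ≤ φ * ‖toLp 2 x‖ * ‖toLp 2 y‖ * ‖toLp 2 w‖)
    (x : ι → ℝ) (y : μ → ℝ) :
    |x ⬝ᵥ crossTerm (cpTensor lam A B C) Φ *ᵥ y|
      ≤ ‖toLp 2 lam‖ * φ * ‖toLp 2 x‖ * ‖toLp 2 y‖ :=
  calc
    _ ≤ ‖toLp 2 x‖ * ‖toLp 2 (crossTerm (cpTensor lam A B C) Φ *ᵥ y)‖ :=
      abs_dotProduct_le_norm_mul_norm _ _
    _ ≤ ‖toLp 2 x‖ * (‖A‖ * (‖toLp 2 lam‖ * (φ * ‖toLp 2 y‖))) := by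
      gcongr
      exact norm_crossTerm_cpTensor_mulVec_le lam A hB hC hφ hΦ y
    _ ≤ ‖toLp 2 x‖ * (1 * (‖toLp 2 lam‖ * (φ * ‖toLp 2 y‖))) := by gcongr
    _ = ‖toLp 2 lam‖ * φ * ‖toLp 2 x‖ * ‖toLp 2 y‖ := by ring

end EuclideanNorm

/-- Cross term in the initialization perturbation:
`E₁ = Σ_u T_u Φ_uᵀ` satisfies `|xᵀ E₁ y| ≤ ‖λ‖ · φ · ‖x‖ · ‖y‖`. -/
theorem cross_term_perturbation_bound
    {d R : ℕ} (hR : 1 ≤ R) (hRd : R ≤ d)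
    (lam : Fin R → ℝ) (A B C : Matrix (Fin d) (Fin R) ℝ)
    (hA : Aᵀ * A = 1)
    (hBcol : ∀ j, eunorm (fun i => B i j) ≤ 1)
    (hCcol : ∀ j, eunorm (fun i => C i j) ≤ 1)
    (T Φ : Fin d → Fin d → Fin d → ℝ)
    (hT : ∀ a b c, T a b c = ∑ j, lam j * A a j * B b j * C c j)
    (φ : ℝ) (hφ : 0 ≤ φ)
    (hop : ∀ x y w : Fin d → ℝ,
      |∑ k, ∑ z, ∑ u, Φ k z u * x k * y z * w u| ≤ φ * eunorm x * eunorm y * eunorm w) :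
    ∀ x y : Fin d → ℝ,
      |∑ i, ∑ j, x i * (∑ u, ∑ b, T i b u * Φ j b u) * y j|
        ≤ Real.sqrt (∑ m, lam m ^ 2) * φ * eunorm x * eunorm y := by
  obtain rfl : T = cpTensor lam A B C := funext₃ hT
  simp only [eunorm, sqrt_sum_sq_eq_norm_toLp, ← dotProduct_crossTerm_mulVec]
    at hBcol hCcol hop ⊢
  exact cross_term_perturbation_bound_general lam
    (l2_opNorm_le_one_of_conjTranspose_mul_self hA) hBcol hCcol hφ hop
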